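/- Let D be an oriented bipartite graph with parts A (|A| = 3m1) and B (|B| = 3n1), m1, n1 ≥ 1, in which every vertex of A has out-degree exactly n1 and every vertex of B has out-degree exactly m1. If D contains no directed C4, then D is isomorphic to D*(3m1, 3n1), where D*(m,n) is the digraph obtained by partitioning A and B each into three equal blocks A1, A2, A3 and B1, B2, B3 and including all arcs from Ai to Bi and from Bi to A(i+1 mod 3). -/

import Mathlib

open Finset

/-- The digraph given by arc relation `E` contains a directed cycle of length 4. -/
def HasDirC4 {V : Type*} (E : V → V → Prop) : Prop :=
  ∃ a b c d : V, a ≠ b ∧ a ≠ c ∧ a ≠ d ∧ b ≠ c ∧ b ≠ d ∧ c ≠ d ∧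
    E a b ∧ E b c ∧ E c d ∧ E d a

/-- Out-degree of a vertex in the digraph `E`. -/
def OutDeg {V : Type*} [Fintype V] (E : V → V → Prop) [DecidableRel E] (u : V) : ℕ :=
  (Finset.univ.filter fun w => E u w).card

/-- In-degree of a vertex in the digraph `E`. -/
def InDeg {V : Type*} [Fintype V] (E : V → V → Prop) [DecidableRel E] (u : V) : ℕ :=
  (Finset.univ.filter fun w => E w u).card

/-- `E` is the extremal digraph `D*(|A|,|B|)` on the bipartition `(A,B)`:
the parts split into three equal blocks `M i`, `N i` with all arcs from
`M i` to `N i` and from `N i` to `M (i+1)`, indices mod 3. -/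
def IsDStar {V : Type*} [DecidableEq V] (A B : Finset V) (E : V → V → Prop) : Prop :=
  ∃ M N : ZMod 3 → Finset V,
    (∀ i j, i ≠ j → Disjoint (M i) (M j)) ∧
    (∀ i j, i ≠ j → Disjoint (N i) (N j)) ∧
    M 0 ∪ M 1 ∪ M 2 = A ∧ N 0 ∪ N 1 ∪ N 2 = B ∧
    (∀ i, 3 * (M i).card = A.card) ∧ (∀ i, 3 * (N i).card = B.card) ∧
    (∀ u v, E u v ↔ ∃ i, (u ∈ M i ∧ v ∈ N i) ∨ (u ∈ N i ∧ v ∈ M (i + 1)))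

/-!
For `a, a' ∈ A` at most one of the two directions admits a path of length two, since otherwise a
directed `C4` appears. Hence the paths of length two between `a` and `a'` together with the common
out-neighbours of `a` and `a'` number at most `n`. Summing over `A × A` and comparing with the bound
`4dm ≤ (d + m)²` for the in-degrees `d` on `B` forces equality everywhere: every in-degree on `B` is
`m`, and every pair `a, a'` attains the bound. Tightness upgrades each path `u → v → w` to the
identity `N⁺(u) = N⁻(w)`. Hence the in-neighbourhoods of the first, third and fifth vertex of a
directed path are disjoint and exhaust a part, so a path on six vertices closes up to a hexagon,
and the in-neighbourhoods of its vertices are the blocks of `D*`.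
-/

section Neighbourhoods

variable {V : Type*} [Fintype V] (E : V → V → Prop) [DecidableRel E]

/-- The out-neighbourhood `N⁺(u)` in the digraph `E`, a finset of cardinality `OutDeg E u`. -/
def outNbhd (u : V) : Finset V := univ.filter fun w => E u w

/-- The in-neighbourhood `N⁻(u)` in the digraph `E`, a finset of cardinality `InDeg E u`. -/
def inNbhd (u : V) : Finset V := univ.filter fun w => E w u

/-- The number of paths of length two from `a` to `a'` and from `a'` to `a`, plus the number of
common out-neighbours of `a` and `a'`. -/
def linkCount [DecidableEq V] (a a' : V) : ℕ :=
  #(outNbhd E a ∩ inNbhd E a') + #(outNbhd E a' ∩ inNbhd E a) + #(outNbhd E a ∩ outNbhd E a')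

variable {E} {u w : V}

@[simp] theorem mem_outNbhd : w ∈ outNbhd E u ↔ E u w := by simp [outNbhd]

@[simp] theorem mem_inNbhd : w ∈ inNbhd E u ↔ E w u := by simp [inNbhd]

theorem linkCount_comm [DecidableEq V] (a a' : V) : linkCount E a a' = linkCount E a' a := by
  rw [linkCount, linkCount, inter_comm (outNbhd E a) (outNbhd E a'),
    add_comm #(outNbhd E a ∩ inNbhd E a')]

theorem linkCount_eq_card_inter_union [DecidableEq V] (hE : ∀ u v, E u v → ¬ E v u) {a a' : V}
    (hpath : Disjoint (outNbhd E a') (inNbhd E a)) :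
    linkCount E a a' = #(outNbhd E a ∩ (inNbhd E a' ∪ outNbhd E a')) := by
  have hdisj : Disjoint (outNbhd E a ∩ inNbhd E a') (outNbhd E a ∩ outNbhd E a') :=
    (disjoint_left.2 fun b hb hb' => hE _ _ (mem_inNbhd.1 hb) (mem_outNbhd.1 hb')).mono
      inter_subset_right inter_subset_right
  rw [linkCount, disjoint_iff_inter_eq_empty.1 hpath, card_empty, add_zero,
    inter_union_distrib_left, card_union_of_disjoint hdisj]

end Neighbourhoods

theorem pairwise_disjoint_of_disjoint_succ {α : Type*} [PartialOrder α] [OrderBot α]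
    {f : ZMod 3 → α} (hf : ∀ i, Disjoint (f i) (f (i + 1))) :
    ∀ i j, i ≠ j → Disjoint (f i) (f j) := by
  have hsucc : ∀ i j : ZMod 3, i ≠ j → j = i + 1 ∨ i = j + 1 := by decide
  intro i j hij
  rcases hsucc i j hij with rfl | rfl
  exacts [hf i, (hf j).symm]

theorem hasDirC4_of_closed_walk {V : Type*} {E : V → V → Prop} (hE : ∀ u v, E u v → ¬ E v u)
    {a b c d : V} (hab : E a b) (hbc : E b c) (hcd : E c d) (hda : E d a) : HasDirC4 E := by
  refine ⟨a, b, c, d, ?_, ?_, ?_, ?_, ?_, ?_, hab, hbc, hcd, hda⟩ <;> rintro rfl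
  exacts [hE _ _ hab hab, hE _ _ hab hbc, hE _ _ hda hda, hE _ _ hbc hbc, hE _ _ hbc hcd,
    hE _ _ hcd hcd]

theorem sum_sum_card_inter {α β : Type*} [DecidableEq β] (s t : Finset α) (u : Finset β)
    (S T : α → Finset β) (hS : ∀ a ∈ s, S a ⊆ u) :
    ∑ a ∈ s, ∑ a' ∈ t, #(S a ∩ T a') = ∑ b ∈ u, #{a ∈ s | b ∈ S a} * #{a ∈ t | b ∈ T a} := by
  calc ∑ a ∈ s, ∑ a' ∈ t, #(S a ∩ T a')
      = ∑ a ∈ s, ∑ a' ∈ t, ∑ b ∈ u, if b ∈ S a ∧ b ∈ T a' then 1 else 0 := by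
        refine sum_congr rfl fun a ha => sum_congr rfl fun a' _ => ?_
        rw [← card_filter, filter_and, filter_mem_eq_inter, filter_mem_eq_inter,
          ← inter_inter_distrib_left, inter_eq_right.2 (inter_subset_left.trans (hS a ha))]
    _ = ∑ b ∈ u, ∑ a ∈ s, ∑ a' ∈ t, if b ∈ S a ∧ b ∈ T a' then 1 else 0 :=
        (sum_congr rfl fun _ _ => sum_comm).trans sum_comm
    _ = ∑ b ∈ u, #{a ∈ s | b ∈ S a} * #{a ∈ t | b ∈ T a} := by
        simp only [card_filter, sum_mul_sum, ite_zero_mul_ite_zero, mul_one]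

theorem union_eq_of_card_eq {α : Type*} [DecidableEq α] {s x y z : Finset α} {k : ℕ}
    (hs : #s = 3 * k) (hxs : x ⊆ s) (hys : y ⊆ s) (hzs : z ⊆ s) (hx : #x = k) (hy : #y = k)
    (hz : #z = k) (hxy : Disjoint x y) (hyz : Disjoint y z) (hxz : Disjoint x z) :
    x ∪ y ∪ z = s := by
  refine eq_of_subset_of_card_le (union_subset (union_subset hxs hys) hzs) ?_
  rw [card_union_of_disjoint (disjoint_union_left.2 ⟨hxz, hyz⟩), card_union_of_disjoint hxy]
  omega

/-- The vertices `p 0, q 0, p 1, q 1, p 2, q 2` form, in this cyclic order, a directed closed walk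
of length six alternating between `A` and `B`. -/
structure IsHexagon {V : Type*} (A B : Finset V) (E : V → V → Prop) (p q : ZMod 3 → V) : Prop where
  mem_left : ∀ i, p i ∈ A
  mem_right : ∀ i, q i ∈ B
  arc : ∀ i, E (p i) (q i)
  arc_succ : ∀ i, E (q i) (p (i + 1))

theorem IsHexagon.rotate {V : Type*} {A B : Finset V} {E : V → V → Prop} {p q : ZMod 3 → V}
    (hpq : IsHexagon A B E p q) : IsHexagon B A E q fun i => p (i + 1) :=
  ⟨hpq.mem_right, fun i => hpq.mem_left (i + 1), hpq.arc_succ, fun i => hpq.arc (i + 1)⟩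

/-- The standing assumptions on the digraph: `E` is an orientation of a bipartite graph with parts
`A` and `B` of sizes `3m` and `3n`, out-degrees are `n` on `A` and `m` on `B`, and there is no
directed `C4`. Vertices outside `A ∪ B` are allowed, but they are isolated. -/
structure IsOutRegularC4Free {V : Type*} [Fintype V] (A B : Finset V) (E : V → V → Prop)
    [DecidableRel E] (m n : ℕ) : Prop where
  card_left : #A = 3 * m
  card_right : #B = 3 * n
  disjoint : Disjoint A B
  bipartite : ∀ u v, E u v → (u ∈ A ∧ v ∈ B) ∨ (u ∈ B ∧ v ∈ A)
  asymm : ∀ u v, E u v → ¬ E v u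
  outDeg_left : ∀ u ∈ A, OutDeg E u = n
  outDeg_right : ∀ v ∈ B, OutDeg E v = m
  not_hasDirC4 : ¬ HasDirC4 E

namespace IsOutRegularC4Free

variable {V : Type*} [Fintype V] {A B : Finset V} {E : V → V → Prop} [DecidableRel E] {m n : ℕ}
  {a a' b c d u v w x y z : V}

theorem swap (h : IsOutRegularC4Free A B E m n) : IsOutRegularC4Free B A E n m :=
  ⟨h.card_right, h.card_left, h.disjoint.symm, fun u v huv => (h.bipartite u v huv).symm, h.asymm,
    h.outDeg_right, h.outDeg_left, h.not_hasDirC4⟩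

theorem not_arc_of_path (h : IsOutRegularC4Free A B E m n) (hab : E a b) (hbc : E b c)
    (hcd : E c d) : ¬ E d a :=
  fun hda => h.not_hasDirC4 (hasDirC4_of_closed_walk h.asymm hab hbc hcd hda)

theorem mem_right_of_arc (h : IsOutRegularC4Free A B E m n) (huv : E u v) (hu : u ∈ A) : v ∈ B :=
  (h.bipartite u v huv).elim And.right fun huv' => absurd huv'.1 (disjoint_left.1 h.disjoint hu)

theorem mem_left_of_arc (h : IsOutRegularC4Free A B E m n) (huv : E u v) (hv : v ∈ B) : u ∈ A :=
  (h.bipartite u v huv).elim And.left fun huv' => absurd hv (disjoint_left.1 h.disjoint huv'.2)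

theorem outNbhd_subset_right (h : IsOutRegularC4Free A B E m n) (ha : a ∈ A) : outNbhd E a ⊆ B :=
  fun _ hb => h.mem_right_of_arc (mem_outNbhd.1 hb) ha

theorem inNbhd_subset_left (h : IsOutRegularC4Free A B E m n) (hb : b ∈ B) : inNbhd E b ⊆ A :=
  fun _ ha => h.mem_left_of_arc (mem_inNbhd.1 ha) hb

theorem exists_arc (h : IsOutRegularC4Free A B E m n) (hn : 1 ≤ n) (ha : a ∈ A) :
    ∃ b ∈ B, E a b := by
  have hpos : 0 < #(outNbhd E a) := hn.trans_eq (h.outDeg_left a ha).symm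
  obtain ⟨b, hb⟩ := card_pos.1 hpos
  exact ⟨b, h.outNbhd_subset_right ha hb, mem_outNbhd.1 hb⟩

theorem card_filter_mem_outNbhd [DecidableEq V] (h : IsOutRegularC4Free A B E m n) (hb : b ∈ B) :
    #{a ∈ A | b ∈ outNbhd E a} = InDeg E b := by
  refine congrArg card (ext fun a => ?_)
  simpa using fun hab => h.mem_left_of_arc hab hb

theorem card_filter_mem_inNbhd [DecidableEq V] (h : IsOutRegularC4Free A B E m n) (hb : b ∈ B) :
    #{a ∈ A | b ∈ inNbhd E a} = m := by
  rw [← h.outDeg_right b hb]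
  refine congrArg card (ext fun a => ?_)
  simpa using fun hba => h.swap.mem_right_of_arc hba hb

theorem sum_inDeg (h : IsOutRegularC4Free A B E m n) : ∑ b ∈ B, InDeg E b = 3 * m * n := by
  classical
  calc ∑ b ∈ B, InDeg E b
      = ∑ b ∈ B, #{a ∈ A | b ∈ outNbhd E a} :=
        sum_congr rfl fun b hb => (h.card_filter_mem_outNbhd hb).symm
    _ = ∑ a ∈ A, #{b ∈ B | b ∈ outNbhd E a} :=
        (sum_card_bipartiteAbove_eq_sum_card_bipartiteBelow fun a b => b ∈ outNbhd E a).symm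
    _ = ∑ _a ∈ A, n := sum_congr rfl fun a ha => by
        rw [filter_mem_eq_inter, inter_eq_right.2 (h.outNbhd_subset_right ha)]
        exact h.outDeg_left a ha
    _ = 3 * m * n := by rw [sum_const, h.card_left, smul_eq_mul]

theorem sum_linkCount [DecidableEq V] (h : IsOutRegularC4Free A B E m n) :
    ∑ a ∈ A, ∑ a' ∈ A, linkCount E a a' =
      ∑ b ∈ B, (2 * m * InDeg E b + InDeg E b ^ 2) := by
  have hpaths : ∑ a ∈ A, ∑ a' ∈ A, #(outNbhd E a ∩ inNbhd E a') = ∑ b ∈ B, InDeg E b * m := by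
    rw [sum_sum_card_inter A A B _ _ fun a => h.outNbhd_subset_right]
    exact sum_congr rfl fun b hb => by
      rw [h.card_filter_mem_outNbhd hb, h.card_filter_mem_inNbhd hb]
  have hpaths' : ∑ a ∈ A, ∑ a' ∈ A, #(outNbhd E a' ∩ inNbhd E a) = ∑ b ∈ B, InDeg E b * m := by
    rw [sum_comm, hpaths]
  have hcommon : ∑ a ∈ A, ∑ a' ∈ A, #(outNbhd E a ∩ outNbhd E a') =
      ∑ b ∈ B, InDeg E b * InDeg E b := by
    rw [sum_sum_card_inter A A B _ _ fun a => h.outNbhd_subset_right]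
    exact sum_congr rfl fun b hb => by rw [h.card_filter_mem_outNbhd hb]
  simp only [linkCount, sum_add_distrib]
  rw [hpaths, hpaths', hcommon, ← sum_add_distrib, ← sum_add_distrib, ← sum_add_distrib]
  exact sum_congr rfl fun b _ => by ring

theorem linkCount_le [DecidableEq V] (h : IsOutRegularC4Free A B E m n) (ha : a ∈ A)
    (ha' : a' ∈ A) : linkCount E a a' ≤ n := by
  have hle : ∀ {a a' : V}, a ∈ A → Disjoint (outNbhd E a') (inNbhd E a) → linkCount E a a' ≤ n := by
    intro a a' ha hpath
    rw [linkCount_eq_card_inter_union h.asymm hpath, ← h.outDeg_left a ha]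
    exact card_le_card inter_subset_left
  by_cases hpath : Disjoint (outNbhd E a') (inNbhd E a)
  · exact hle ha hpath
  · obtain ⟨b, hb, hb'⟩ := not_disjoint_iff.1 hpath
    rw [linkCount_comm]
    exact hle ha' <| disjoint_left.2 fun c hc hc' => h.not_arc_of_path (mem_outNbhd.1 hb)
      (mem_inNbhd.1 hb') (mem_outNbhd.1 hc) (mem_inNbhd.1 hc')

theorem sum_inDeg_add_sq [DecidableEq V] (h : IsOutRegularC4Free A B E m n) :
    ∑ b ∈ B, (InDeg E b + m) ^ 2 = ∑ a ∈ A, ∑ a' ∈ A, linkCount E a a' + 3 * m ^ 2 * n := by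
  have hconst : 3 * m ^ 2 * n = ∑ b ∈ B, m ^ 2 := by
    rw [sum_const, h.card_right, smul_eq_mul]; ring
  rw [h.sum_linkCount, hconst, ← sum_add_distrib]
  exact sum_congr rfl fun b _ => by ring

theorem sum_four_mul_inDeg_mul (h : IsOutRegularC4Free A B E m n) :
    ∑ b ∈ B, 4 * InDeg E b * m = 12 * m ^ 2 * n := by
  rw [← sum_mul, ← mul_sum, h.sum_inDeg]; ring

theorem inDeg_right (h : IsOutRegularC4Free A B E m n) (hb : b ∈ B) : InDeg E b = m := by
  classical
  have hamgm : ∀ b ∈ B, 4 * InDeg E b * m ≤ (InDeg E b + m) ^ 2 :=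
    fun b _ => four_mul_le_sq_add _ _
  have hlink : ∑ a ∈ A, ∑ a' ∈ A, linkCount E a a' ≤ 3 * m * (3 * m * n) := by
    simpa only [sum_const, h.card_left, smul_eq_mul] using
      sum_le_sum fun a ha => sum_le_sum fun a' ha' => h.linkCount_le ha ha'
  have hsum : ∑ b ∈ B, 4 * InDeg E b * m = ∑ b ∈ B, (InDeg E b + m) ^ 2 := by
    refine (sum_le_sum hamgm).antisymm ?_
    rw [h.sum_four_mul_inDeg_mul, h.sum_inDeg_add_sq]
    linarith
  have heq := (sum_eq_sum_iff_of_le hamgm).1 hsum b hb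
  zify at heq ⊢
  exact sub_eq_zero.1 (pow_eq_zero_iff two_ne_zero |>.1 (by linear_combination -heq))

theorem linkCount_eq [DecidableEq V] (h : IsOutRegularC4Free A B E m n) (ha : a ∈ A)
    (ha' : a' ∈ A) : linkCount E a a' = n := by
  have hle : ∀ a ∈ A, ∀ a' ∈ A, linkCount E a a' ≤ n := fun a ha a' ha' => h.linkCount_le ha ha'
  have hsum : ∑ a ∈ A, ∑ a' ∈ A, linkCount E a a' = ∑ _a ∈ A, ∑ _a' ∈ A, n := by
    have hsq : ∑ b ∈ B, (InDeg E b + m) ^ 2 = ∑ b ∈ B, 4 * InDeg E b * m :=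
      sum_congr rfl fun b hb => by rw [h.inDeg_right hb]; ring
    rw [h.sum_inDeg_add_sq, h.sum_four_mul_inDeg_mul] at hsq
    simp only [sum_const, h.card_left, smul_eq_mul]
    linarith
  have hrow := (sum_eq_sum_iff_of_le fun a ha => sum_le_sum (hle a ha)).1 hsum a ha
  exact (sum_eq_sum_iff_of_le (hle a ha)).1 hrow a' ha'

theorem reverse (h : IsOutRegularC4Free A B E m n) :
    IsOutRegularC4Free A B (fun u v => E v u) m n :=
  ⟨h.card_left, h.card_right, h.disjoint,
    fun u v hvu => (h.bipartite v u hvu).symm.imp And.symm And.symm, fun u v => h.asymm v u,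
    fun _ ha => h.swap.inDeg_right ha, fun _ hb => h.inDeg_right hb,
    fun ⟨_, _, _, _, _, _, _, _, _, _, hba, hcb, hdc, had⟩ =>
      h.not_hasDirC4 (hasDirC4_of_closed_walk h.asymm hdc hcb hba had)⟩

theorem arc_or_arc_of_no_path (h : IsOutRegularC4Free A B E m n) (ha : a ∈ A) (ha' : a' ∈ A)
    (hpath : ∀ d, E a' d → ¬ E d a) (hac : E a c) : E c a' ∨ E a' c := by
  classical
  have hpath' : Disjoint (outNbhd E a') (inNbhd E a) :=
    disjoint_left.2 fun d hd hd' => hpath d (mem_outNbhd.1 hd) (mem_inNbhd.1 hd')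
  have hcard : #(outNbhd E a) ≤ #(outNbhd E a ∩ (inNbhd E a' ∪ outNbhd E a')) := by
    rw [← linkCount_eq_card_inter_union h.asymm hpath', h.linkCount_eq ha ha']
    exact (h.outDeg_left a ha).le
  have hsub := inter_eq_left.1 (eq_of_subset_of_card_le inter_subset_left hcard)
  simpa using hsub (mem_outNbhd.2 hac)

theorem exists_path_of_not_adj (h : IsOutRegularC4Free A B E m n) (ha : a ∈ A) (hx : x ∈ A)
    (hab : E a b) (hbx : ¬ E b x) (hxb : ¬ E x b) : ∃ d, E x d ∧ E d a := by
  by_contra! hpath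
  exact (h.arc_or_arc_of_no_path ha hx hpath hab).elim hbx hxb

theorem arc_of_not_adj (h : IsOutRegularC4Free A B E m n) (ha : a ∈ A) (hab : E a b)
    (hba' : E b a') (hac : E a c) (ha'c : E a' c) (hx : x ∈ A) (hbx : ¬ E b x) (hxb : ¬ E x b) :
    E x c := by
  have ha' : a' ∈ A := h.swap.mem_right_of_arc hba' (h.mem_right_of_arc hab ha)
  obtain ⟨d, hxd, hda⟩ := h.exists_path_of_not_adj ha hx hab hbx hxb
  obtain ⟨d', hd'x, ha'd'⟩ := h.reverse.exists_path_of_not_adj ha' hx hba' hxb hbx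
  have hpath : ∀ f, E x f → ¬ E f a' := fun f hxf hfa' => h.not_arc_of_path ha'd' hd'x hxf hfa'
  exact (h.arc_or_arc_of_no_path ha' hx hpath ha'c).resolve_left
    fun hcx => h.not_arc_of_path hac hcx hxd hda

theorem not_common_outNbr (h : IsOutRegularC4Free A B E m n) (ha : a ∈ A) (hab : E a b)
    (hba' : E b a') (hac : E a c) : ¬ E a' c := by
  classical
  intro ha'c
  -- `A` has at least `m` non-neighbours of `b`; these and `a` would all be in-neighbours of `c`.
  have hb : b ∈ B := h.mem_right_of_arc hab ha
  have hc : c ∈ B := h.mem_right_of_arc hac ha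
  have hcover : A ⊆ outNbhd E b ∪ inNbhd E b ∪ (inNbhd E c).erase a := by
    intro x hx
    by_cases hbx : E b x
    · simp [hbx]
    by_cases hxb : E x b
    · simp [hxb]
    have hxa : x ≠ a := fun hxa => hxb (hxa ▸ hab)
    simp [hxa, h.arc_of_not_adj ha hab hba' hac ha'c hx hbx hxb]
  have hac' : a ∈ inNbhd E c := mem_inNbhd.2 hac
  have hcard : #A ≤ #(outNbhd E b) + #(inNbhd E b) + #((inNbhd E c).erase a) :=
    (card_le_card hcover).trans <| (card_union_le _ _).trans <|
      Nat.add_le_add_right (card_union_le _ _) _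
  have hout : #(outNbhd E b) = m := h.outDeg_right b hb
  have hin : #(inNbhd E b) = m := h.inDeg_right hb
  have hinc : #(inNbhd E c) = m := h.inDeg_right hc
  have herase : #((inNbhd E c).erase a) < #(inNbhd E c) := card_erase_lt_of_mem hac'
  have hcard_left := h.card_left
  omega

theorem outNbhd_eq_inNbhd_of_mem (h : IsOutRegularC4Free A B E m n) (hu : u ∈ A) (huv : E u v)
    (hvw : E v w) : outNbhd E u = inNbhd E w := by
  have hw : w ∈ A := h.swap.mem_right_of_arc hvw (h.mem_right_of_arc huv hu)
  have hpath : ∀ d, E w d → ¬ E d u := fun d hwd hdu => h.not_arc_of_path huv hvw hwd hdu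
  refine eq_of_subset_of_card_le (fun c hc => mem_inNbhd.2 ?_) ?_
  · have huc := mem_outNbhd.1 hc
    exact (h.arc_or_arc_of_no_path hu hw hpath huc).resolve_right
      (h.not_common_outNbr hu huv hvw huc)
  · exact ((h.swap.inDeg_right hw).trans (h.outDeg_left u hu).symm).le

theorem outNbhd_eq_inNbhd (h : IsOutRegularC4Free A B E m n) (huv : E u v) (hvw : E v w) :
    outNbhd E u = inNbhd E w := by
  rcases h.bipartite u v huv with ⟨hu, -⟩ | ⟨hu, -⟩
  · exact h.outNbhd_eq_inNbhd_of_mem hu huv hvw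
  · exact h.swap.outNbhd_eq_inNbhd_of_mem hu huv hvw

theorem arc_iff_arc_of_path_two (h : IsOutRegularC4Free A B E m n) (huv : E u v) (hvw : E v w) :
    E u x ↔ E x w := by
  rw [← mem_outNbhd (E := E), h.outNbhd_eq_inNbhd huv hvw, mem_inNbhd]

theorem disjoint_inNbhd_of_path_two (h : IsOutRegularC4Free A B E m n) (huv : E u v)
    (hvw : E v w) : Disjoint (inNbhd E u) (inNbhd E w) := by
  simp only [disjoint_left, mem_inNbhd, ← h.arc_iff_arc_of_path_two huv hvw]
  exact fun z => h.asymm z u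

theorem disjoint_inNbhd_of_path_four (h : IsOutRegularC4Free A B E m n) (huv : E u v)
    (hvw : E v w) (hwx : E w x) (hxy : E x y) : Disjoint (inNbhd E u) (inNbhd E y) := by
  simp only [disjoint_left, mem_inNbhd, ← h.arc_iff_arc_of_path_two hwx hxy]
  exact fun z hzu hwz => h.not_arc_of_path huv hvw hwz hzu

theorem union_inNbhd_eq_of_path_four [DecidableEq V] (h : IsOutRegularC4Free A B E m n) (hu : u ∈ B)
    (huv : E u v) (hvw : E v w) (hwx : E w x) (hxy : E x y) :
    inNbhd E u ∪ inNbhd E w ∪ inNbhd E y = A := by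
  have hw : w ∈ B := h.mem_right_of_arc hvw (h.swap.mem_right_of_arc huv hu)
  have hy : y ∈ B := h.mem_right_of_arc hxy (h.swap.mem_right_of_arc hwx hw)
  exact union_eq_of_card_eq h.card_left (h.inNbhd_subset_left hu) (h.inNbhd_subset_left hw)
    (h.inNbhd_subset_left hy) (h.inDeg_right hu) (h.inDeg_right hw) (h.inDeg_right hy)
    (h.disjoint_inNbhd_of_path_two huv hvw) (h.disjoint_inNbhd_of_path_two hwx hxy)
    (h.disjoint_inNbhd_of_path_four huv hvw hwx hxy)

theorem arc_of_path_five (h : IsOutRegularC4Free A B E m n) (hu : u ∈ B) (huv : E u v)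
    (hvw : E v w) (hwx : E w x) (hxy : E x y) (hyz : E y z) : E z u := by
  classical
  have hw : w ∈ B := h.mem_right_of_arc hvw (h.swap.mem_right_of_arc huv hu)
  have hy : y ∈ B := h.mem_right_of_arc hxy (h.swap.mem_right_of_arc hwx hw)
  have hz : z ∈ inNbhd E u ∪ inNbhd E w ∪ inNbhd E y := by
    rw [h.union_inNbhd_eq_of_path_four hu huv hvw hwx hxy]
    exact h.swap.mem_right_of_arc hyz hy
  simp only [mem_union, mem_inNbhd] at hz
  rcases hz with (hzu | hzw) | hzy
  · exact hzu
  · exact (h.not_arc_of_path hwx hxy hyz hzw).elim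
  · exact (h.asymm _ _ hyz hzy).elim

theorem exists_isHexagon (h : IsOutRegularC4Free A B E m n) (hm : 1 ≤ m) (hn : 1 ≤ n) :
    ∃ a b : ZMod 3 → V, IsHexagon A B E a b := by
  obtain ⟨a₀, ha₀⟩ : A.Nonempty := card_pos.1 (by rw [h.card_left]; omega)
  obtain ⟨b₀, hb₀, hab₀⟩ := h.exists_arc hn ha₀
  obtain ⟨a₁, ha₁, hba₀⟩ := h.swap.exists_arc hm hb₀
  obtain ⟨b₁, hb₁, hab₁⟩ := h.exists_arc hn ha₁
  obtain ⟨a₂, ha₂, hba₁⟩ := h.swap.exists_arc hm hb₁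
  obtain ⟨b₂, hb₂, hab₂⟩ := h.exists_arc hn ha₂
  have hba₂ : E b₂ a₀ := h.swap.arc_of_path_five ha₀ hab₀ hba₀ hab₁ hba₁ hab₂
  refine ⟨![a₀, a₁, a₂], ![b₀, b₁, b₂], fun i => ?_, fun i => ?_, fun i => ?_, fun i => ?_⟩ <;>
    fin_cases i
  exacts [ha₀, ha₁, ha₂, hb₀, hb₁, hb₂, hab₀, hab₁, hab₂, hba₀, hba₁, hba₂]

variable {p q : ZMod 3 → V}

theorem pairwise_disjoint_inNbhd (h : IsOutRegularC4Free A B E m n) (hpq : IsHexagon A B E p q) :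
    ∀ i j, i ≠ j → Disjoint (inNbhd E (q i)) (inNbhd E (q j)) :=
  pairwise_disjoint_of_disjoint_succ fun i =>
    h.disjoint_inNbhd_of_path_two (hpq.arc_succ i) (hpq.arc (i + 1))

theorem union_inNbhd_eq_left [DecidableEq V] (h : IsOutRegularC4Free A B E m n)
    (hpq : IsHexagon A B E p q) :
    inNbhd E (q 0) ∪ inNbhd E (q 1) ∪ inNbhd E (q 2) = A :=
  h.union_inNbhd_eq_of_path_four (hpq.mem_right 0) (hpq.arc_succ 0) (hpq.arc 1) (hpq.arc_succ 1)
    (hpq.arc 2)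

theorem exists_arc_to_hexagon (h : IsOutRegularC4Free A B E m n) (hpq : IsHexagon A B E p q)
    (hu : u ∈ A) : ∃ i, E u (q i) := by
  classical
  rw [← h.union_inNbhd_eq_left hpq] at hu
  simp only [mem_union, mem_inNbhd] at hu
  rcases hu with (h₀ | h₁) | h₂
  exacts [⟨0, h₀⟩, ⟨1, h₁⟩, ⟨2, h₂⟩]

theorem arc_iff_of_isHexagon (h : IsOutRegularC4Free A B E m n) (hpq : IsHexagon A B E p q) :
    E u v ↔ ∃ i, (E u (q i) ∧ E v (p (i + 1))) ∨ (E u (p (i + 1)) ∧ E v (q (i + 1))) := by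
  constructor
  · intro huv
    rcases h.bipartite u v huv with ⟨hu, -⟩ | ⟨hu, -⟩
    · obtain ⟨i, hui⟩ := h.exists_arc_to_hexagon hpq hu
      exact ⟨i, .inl ⟨hui, (h.arc_iff_arc_of_path_two hui (hpq.arc_succ i)).1 huv⟩⟩
    · obtain ⟨i, hui⟩ := h.swap.exists_arc_to_hexagon hpq.rotate hu
      exact ⟨i, .inr ⟨hui, (h.arc_iff_arc_of_path_two hui (hpq.arc (i + 1))).1 huv⟩⟩
  · rintro ⟨i, ⟨hui, hvi⟩ | ⟨hui, hvi⟩⟩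
    · exact (h.arc_iff_arc_of_path_two hui (hpq.arc_succ i)).2 hvi
    · exact (h.arc_iff_arc_of_path_two hui (hpq.arc (i + 1))).2 hvi

theorem isDStar_of_isHexagon [DecidableEq V] (h : IsOutRegularC4Free A B E m n)
    (hpq : IsHexagon A B E p q) : IsDStar A B E := by
  refine ⟨fun i => inNbhd E (q i), fun i => inNbhd E (p (i + 1)),
    h.pairwise_disjoint_inNbhd hpq, h.swap.pairwise_disjoint_inNbhd hpq.rotate,
    h.union_inNbhd_eq_left hpq, h.swap.union_inNbhd_eq_left hpq.rotate,
    fun i => ?_, fun i => ?_, fun u v => ?_⟩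
  · rw [h.card_left]
    exact congrArg (3 * ·) (h.inDeg_right (hpq.mem_right i))
  · rw [h.card_right]
    exact congrArg (3 * ·) (h.swap.inDeg_right (hpq.mem_left (i + 1)))
  · simpa only [mem_inNbhd] using h.arc_iff_of_isHexagon hpq

end IsOutRegularC4Free

theorem C4_free_regular_oriented_bipartite_is_DStar {V : Type*} [Fintype V] [DecidableEq V]
    (A B : Finset V) (E : V → V → Prop) [DecidableRel E]
    (m1 n1 : ℕ) (hm1 : 1 ≤ m1) (hn1 : 1 ≤ n1)
    (hAcard : A.card = 3 * m1) (hBcard : B.card = 3 * n1)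
    (hdisj : Disjoint A B) (hcover : A ∪ B = Finset.univ)
    (hbip : ∀ u v, E u v → (u ∈ A ∧ v ∈ B) ∨ (u ∈ B ∧ v ∈ A))
    (horient : ∀ u v, E u v → ¬ E v u)
    (houtA : ∀ u ∈ A, OutDeg E u = n1)
    (houtB : ∀ v ∈ B, OutDeg E v = m1)
    (hnoC4 : ¬ HasDirC4 E) :
    IsDStar A B E := by
  have h : IsOutRegularC4Free A B E m1 n1 :=
    ⟨hAcard, hBcard, hdisj, hbip, horient, houtA, houtB, hnoC4⟩
  obtain ⟨p, q, hpq⟩ := h.exists_isHexagon hm1 hn1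
  exact h.isDStar_of_isHexagon hpq
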